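/- (Theorem 1) Suppose that for each s ∈ 𝒮 the conditional law ν_{f*|s} is absolutely continuous with respect to Lebesgue measure on ℝ^k and has finite second moment. Then min_{f : U(f)=0} E‖f*(X,S) − f(X,S)‖₂² = min_ν Σ_{s∈𝒮} p_s W₂²(ν_{f*|s}, ν) = U(f*). Moreover, if ν₀ minimizes ν ↦ Σ_{s∈𝒮} p_s W₂²(ν_{f*|s}, ν) and T_{f*|s,ν₀} : ℝ^k → ℝ^k denotes the optimal transport map from ν_{f*|s} to ν₀, then f₀(x,s) := T_{f*|s,ν₀}(f*(x,s)) attains the minimum on the left-hand side, and the law of f₀(X,S) is ν₀. -/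

import Mathlib

/-!
Squared risk and squared Wasserstein distance are squares of `L²` quantities, so Minkowski's
inequality applies: moving each coupling of `ν_{g|s}` and `ν` to one of `ν_{f|s}` and `ν` through
the joint law of `f(X,S)` and `g(X,S)` costs at most the `L²` distance of `f` and `g`, whence
`√U(f) ≤ √R(f, g) + √U(g)`. For fair `g` this gives `U(f*) ≤ R(g)`. Conversely, transporting every
group law onto the barycenter `ν₀` makes all group laws equal to `ν₀`, and the risk paid is exactly
the transport cost `Σ_s p_s W₂²(ν_{f*|s}, ν₀) = U(f*)`.
-/

open MeasureTheory ProbabilityTheory ENNReal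

noncomputable section

abbrev Euc (k : ℕ) : Type := EuclideanSpace ℝ (Fin k)

/-- Squared Wasserstein-2 distance between measures on `ℝ^k`,
as the infimum over couplings of the expected squared Euclidean distance. -/
def W2sq {k : ℕ} (μ ν : Measure (Euc k)) : ℝ≥0∞ :=
  ⨅ γ ∈ {γ : Measure (Euc k × Euc k) |
      γ.map Prod.fst = μ ∧ γ.map Prod.snd = ν},
    ∫⁻ p, (‖p.1 - p.2‖₊ : ℝ≥0∞) ^ 2 ∂γ

/-- The law of `f (X, S)` conditional on `S = s`. -/
def condLaw {Ω : Type*} [MeasurableSpace Ω] {d k m : ℕ} (P : Measure Ω)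
    (X : Ω → Euc d) (S : Ω → Fin m) (f : Euc d → Fin m → Euc k) (s : Fin m) :
    Measure (Euc k) :=
  (ProbabilityTheory.cond P {ω | S ω = s}).map fun ω => f (X ω) (S ω)

/-- Finite second moment functional. -/
def secondMoment {k : ℕ} (μ : Measure (Euc k)) : ℝ≥0∞ :=
  ∫⁻ y, (‖y‖₊ : ℝ≥0∞) ^ 2 ∂μ

/-- The unfairness measure `U(f)`: the infimum over probability measures `ν` of the
weighted sum of squared Wasserstein-2 distances of the group-conditional laws to `ν`. -/
def unfairness {Ω : Type*} [MeasurableSpace Ω] {d k m : ℕ} (P : Measure Ω)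
    (X : Ω → Euc d) (S : Ω → Fin m) (f : Euc d → Fin m → Euc k) : ℝ≥0∞ :=
  ⨅ ν ∈ {ν : Measure (Euc k) | IsProbabilityMeasure ν},
    ∑ s : Fin m, P {ω | S ω = s} * W2sq (condLaw P X S f s) ν

/-- The risk `R(f) = E ‖f*(X,S) - f(X,S)‖²`. -/
def risk {Ω : Type*} [MeasurableSpace Ω] {d k m : ℕ} (P : Measure Ω)
    (X : Ω → Euc d) (S : Ω → Fin m) (fstar f : Euc d → Fin m → Euc k) : ℝ≥0∞ :=
  ∫⁻ ω, (‖fstar (X ω) (S ω) - f (X ω) (S ω)‖₊ : ℝ≥0∞) ^ 2 ∂P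

theorem eLpNorm_two_eq_lintegral_enorm_sq {α ε : Type*} [MeasurableSpace α] [ENorm ε]
    (f : α → ε) (μ : Measure α) :
    eLpNorm f 2 μ = (∫⁻ x, ‖f x‖ₑ ^ 2 ∂μ) ^ (1 / 2 : ℝ) := by
  simp [eLpNorm_eq_lintegral_rpow_enorm_toReal (f := f) (μ := μ) two_ne_zero ofNat_ne_top]

theorem weighted_Lp_add_le {ι : Type*} (t : Finset ι) (w a b : ι → ℝ≥0∞) {p : ℝ} (hp : 1 ≤ p) :
    (∑ i ∈ t, w i * (a i + b i) ^ p) ^ (1 / p) ≤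
      (∑ i ∈ t, w i * a i ^ p) ^ (1 / p) + (∑ i ∈ t, w i * b i ^ p) ^ (1 / p) := by
  have hp₀ : 0 < p := by positivity
  have absorb (i : ι) (c : ℝ≥0∞) : w i * c ^ p = (w i ^ (1 / p) * c) ^ p := by
    rw [mul_rpow_of_nonneg _ _ hp₀.le, ← rpow_mul, one_div_mul_cancel hp₀.ne', rpow_one]
  simpa only [absorb, mul_add] using
    ENNReal.Lp_add_le t (fun i ↦ w i ^ (1 / p) * a i) (fun i ↦ w i ^ (1 / p) * b i) hp

theorem lintegral_eq_sum_cond_fiber {Ω ι : Type*} [MeasurableSpace Ω] [Fintype ι]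
    [MeasurableSpace ι] [DiscreteMeasurableSpace ι] {S : Ω → ι} (hS : Measurable S)
    (P : Measure Ω) [IsFiniteMeasure P] (g : Ω → ℝ≥0∞) :
    ∫⁻ ω, g ω ∂P = ∑ s, P (S ⁻¹' {s}) * ∫⁻ ω, g ω ∂P[|S ← s] := by
  conv_lhs => rw [← sum_meas_smul_cond_fiber hS P]
  simp only [lintegral_finsetSum_measure, lintegral_smul_measure, smul_eq_mul]

theorem ae_eq_cond_fiber {Ω ι β : Type*} [MeasurableSpace Ω] [MeasurableSpace ι]
    [MeasurableSingletonClass ι] {P : Measure Ω} {S : Ω → ι} (hS : Measurable S) (s : ι)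
    (F : ι → Ω → β) : (fun ω ↦ F (S ω) ω) =ᵐ[P[|S ← s]] F s := by
  filter_upwards [ae_cond_mem (hS (measurableSet_singleton s))] with ω hω
  rw [show S ω = s from hω]

theorem map_eq_of_forall_map_cond_fiber_eq {Ω ι β : Type*} [MeasurableSpace Ω] [Finite ι]
    [MeasurableSpace ι] [DiscreteMeasurableSpace ι] [MeasurableSpace β] {S : Ω → ι}
    (hS : Measurable S) {P : Measure Ω} [IsProbabilityMeasure P] {Y : Ω → β} (hY : Measurable Y)
    {ν : Measure β} (h : ∀ s, P[|S ← s].map Y = ν) : P.map Y = ν := by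
  have := Fintype.ofFinite ι
  refine Measure.ext_of_lintegral _ fun g hg ↦ ?_
  have hcond (s : ι) : ∫⁻ ω, g (Y ω) ∂P[|S ← s] = ∫⁻ y, g y ∂ν := by
    rw [← h s, lintegral_map hg hY]
  have hweights : ∑ s, P (S ⁻¹' {s}) = 1 := by
    simpa using sum_measure_preimage_singleton (μ := P) Finset.univ
      fun s _ ↦ hS (measurableSet_singleton s)
  rw [lintegral_map hg hY, lintegral_eq_sum_cond_fiber hS]
  simp only [hcond, ← Finset.sum_mul, hweights, one_mul]

section Coupling

variable {α β γ : Type*} [MeasurableSpace α] [MeasurableSpace β] [MeasurableSpace γ]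

theorem map_prodMap_compProd_comap (μ : Measure α) [SFinite μ] {f : α → β} (hf : Measurable f)
    (κ : Kernel β γ) [IsSFiniteKernel κ] :
    (μ ⊗ₘ κ.comap f hf).map (Prod.map f id) = μ.map f ⊗ₘ κ := by
  refine Measure.ext_of_lintegral _ fun g hg ↦ ?_
  have hfg : Measurable fun p : α × γ ↦ g (Prod.map f id p) := by fun_prop
  rw [lintegral_map hg (by fun_prop), Measure.lintegral_compProd hfg,
    Measure.lintegral_compProd hg, lintegral_map hg.lintegral_kernel_prod_right' hf]
  rfl

theorem exists_fst_eq_and_map_prodMap_eq [StandardBorelSpace γ] [Nonempty γ] (μ : Measure α)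
    [IsFiniteMeasure μ] {f : α → β} (hf : Measurable f) (ρ : Measure (β × γ))
    (h : ρ.fst = μ.map f) :
    ∃ π : Measure (α × γ), π.fst = μ ∧ π.map (Prod.map f id) = ρ := by
  have : IsFiniteMeasure ρ :=
    ⟨by rw [← Measure.fst_univ, h]; exact measure_lt_top (μ.map f) Set.univ⟩
  refine ⟨μ ⊗ₘ ρ.condKernel.comap f hf, Measure.fst_compProd _ _, ?_⟩
  rw [map_prodMap_compProd_comap, ← h, ρ.disintegrate]

end Coupling

/-- The Wasserstein-2 distance `W₂`, i.e. the square root of `W2sq`. -/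
def W2 {k : ℕ} (μ ν : Measure (Euc k)) : ℝ≥0∞ := W2sq μ ν ^ (1 / 2 : ℝ)

section Wasserstein

variable {k : ℕ} {Ω : Type*} [MeasurableSpace Ω]

theorem W2_rpow_two (μ ν : Measure (Euc k)) : W2 μ ν ^ (2 : ℝ) = W2sq μ ν := by
  rw [W2, ← rpow_mul, one_div_mul_cancel two_ne_zero, rpow_one]

theorem W2_eq_iInf_eLpNorm (μ ν : Measure (Euc k)) :
    W2 μ ν = ⨅ γ ∈ {γ : Measure (Euc k × Euc k) | γ.fst = μ ∧ γ.snd = ν},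
      eLpNorm (fun p ↦ p.1 - p.2) 2 γ := by
  simp only [eLpNorm_two_eq_lintegral_enorm_sq]
  exact (orderIsoRpow (1 / 2) (by norm_num)).map_iInf₂ _

theorem W2_map_map_le_eLpNorm (μ : Measure Ω) {Y Z : Ω → Euc k} (hY : Measurable Y)
    (hZ : Measurable Z) : W2 (μ.map Y) (μ.map Z) ≤ eLpNorm (Y - Z) 2 μ := by
  have hYZ : Measurable fun ω ↦ (Y ω, Z ω) := hY.prodMk hZ
  rw [W2_eq_iInf_eLpNorm]
  refine (iInf₂_le (μ.map fun ω ↦ (Y ω, Z ω))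
    ⟨Measure.fst_map_prodMk hZ, Measure.snd_map_prodMk hY⟩).trans_eq ?_
  exact eLpNorm_map_measure (by fun_prop) hYZ.aemeasurable

theorem W2sq_self (μ : Measure (Euc k)) : W2sq μ μ = 0 := by
  have h : W2 μ μ = 0 := by simpa using W2_map_map_le_eLpNorm μ measurable_id measurable_id
  simp [← W2_rpow_two, h]

theorem W2_map_le_eLpNorm_add_W2_map (μ : Measure Ω) [IsFiniteMeasure μ] {Y Z : Ω → Euc k}
    (hY : Measurable Y) (hZ : Measurable Z) (ν : Measure (Euc k)) :
    W2 (μ.map Y) ν ≤ eLpNorm (Y - Z) 2 μ + W2 (μ.map Z) ν := by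
  simp only [W2_eq_iInf_eLpNorm (μ.map Z), add_iInf]
  refine le_iInf₂ fun γ hγ ↦ ?_
  obtain ⟨hγfst, rfl⟩ := hγ
  obtain ⟨π, rfl, rfl⟩ := exists_fst_eq_and_map_prodMap_eq μ hZ γ hγfst
  have hYZ : AEStronglyMeasurable (Y - Z) π.fst := by fun_prop
  have hfst : π.fst.map Y = π.map fun q ↦ Y q.1 := Measure.map_map hY measurable_fst
  have hsnd : (π.map (Prod.map Z id)).snd = π.map Prod.snd :=
    Measure.map_map measurable_snd (by fun_prop)
  calc W2 (π.fst.map Y) (π.map (Prod.map Z id)).snd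
      ≤ eLpNorm (fun q ↦ Y q.1 - q.2) 2 π := by
        rw [hfst, hsnd]
        exact W2_map_map_le_eLpNorm π (hY.comp measurable_fst) measurable_snd
    _ = eLpNorm ((fun q ↦ Y q.1 - Z q.1) + fun q ↦ Z q.1 - q.2) 2 π := by
        congr 1
        ext1 q
        exact (sub_add_sub_cancel _ _ _).symm
    _ ≤ eLpNorm (fun q ↦ Y q.1 - Z q.1) 2 π + eLpNorm (fun q ↦ Z q.1 - q.2) 2 π :=
        eLpNorm_add_le (by fun_prop) (by fun_prop) one_le_two
    _ = eLpNorm (Y - Z) 2 π.fst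
          + eLpNorm (fun p : Euc k × Euc k ↦ p.1 - p.2) 2 (π.map (Prod.map Z id)) := by
        rw [Measure.fst, eLpNorm_map_measure hYZ (by fun_prop),
          eLpNorm_map_measure (by fun_prop) (by fun_prop)]
        rfl

end Wasserstein

section Fairness

variable {Ω : Type*} [MeasurableSpace Ω] {d k m : ℕ} {P : Measure Ω} {X : Ω → Euc d}
  {S : Ω → Fin m} {f g : Euc d → Fin m → Euc k} {ν : Measure (Euc k)}

/-- The objective `Σ_s p_s W₂²(ν_{f|s}, ν)` of the barycenter problem, whose infimum over `ν` is
`unfairness P X S f`. -/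
def barycenterCost (P : Measure Ω) (X : Ω → Euc d) (S : Ω → Fin m) (f : Euc d → Fin m → Euc k)
    (ν : Measure (Euc k)) : ℝ≥0∞ :=
  ∑ s, P {ω | S ω = s} * W2sq (condLaw P X S f s) ν

theorem risk_eq_sum_cond [IsFiniteMeasure P] (hS : Measurable S) :
    risk P X S f g = ∑ s, P {ω | S ω = s} *
      eLpNorm (fun ω ↦ f (X ω) (S ω) - g (X ω) (S ω)) 2 P[|{ω | S ω = s}] ^ (2 : ℝ) := by
  simp only [eLpNorm_two_eq_lintegral_enorm_sq, ← rpow_mul, one_div_mul_cancel (two_ne_zero' ℝ),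
    rpow_one]
  exact lintegral_eq_sum_cond_fiber hS P _

theorem barycenterCost_rpow_half_le_add [IsFiniteMeasure P] (hS : Measurable S)
    (hf : Measurable fun ω ↦ f (X ω) (S ω)) (hg : Measurable fun ω ↦ g (X ω) (S ω))
    (ν : Measure (Euc k)) :
    barycenterCost P X S f ν ^ (1 / 2 : ℝ) ≤
      risk P X S f g ^ (1 / 2 : ℝ) + barycenterCost P X S g ν ^ (1 / 2 : ℝ) := by
  simp only [barycenterCost, risk_eq_sum_cond hS, ← W2_rpow_two]
  refine le_trans ?_ (weighted_Lp_add_le _ _ _ _ one_le_two)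
  gcongr with s
  exact W2_map_le_eLpNorm_add_W2_map _ hf hg ν

theorem unfairness_rpow_half_eq_iInf :
    unfairness P X S f ^ (1 / 2 : ℝ) =
      ⨅ ν ∈ {ν : Measure (Euc k) | IsProbabilityMeasure ν},
        barycenterCost P X S f ν ^ (1 / 2 : ℝ) :=
  (orderIsoRpow (1 / 2) (by norm_num)).map_iInf₂ _

theorem unfairness_rpow_half_le_add [IsFiniteMeasure P] (hS : Measurable S)
    (hf : Measurable fun ω ↦ f (X ω) (S ω)) (hg : Measurable fun ω ↦ g (X ω) (S ω)) :
    unfairness P X S f ^ (1 / 2 : ℝ) ≤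
      risk P X S f g ^ (1 / 2 : ℝ) + unfairness P X S g ^ (1 / 2 : ℝ) := by
  simp only [unfairness_rpow_half_eq_iInf, add_iInf]
  exact iInf₂_mono fun ν _ ↦ barycenterCost_rpow_half_le_add hS hf hg ν

theorem unfairness_le_risk_of_unfairness_eq_zero [IsFiniteMeasure P] (hS : Measurable S)
    (hf : Measurable fun ω ↦ f (X ω) (S ω)) (hg : Measurable fun ω ↦ g (X ω) (S ω))
    (hfair : unfairness P X S g = 0) : unfairness P X S f ≤ risk P X S f g := by
  have h := unfairness_rpow_half_le_add hS hf hg (P := P)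
  rwa [hfair, zero_rpow_of_pos one_half_pos, add_zero, rpow_le_rpow_iff one_half_pos] at h

theorem unfairness_eq_barycenterCost_of_forall_le [IsProbabilityMeasure ν]
    (hmin : ∀ ν' : Measure (Euc k), IsProbabilityMeasure ν' →
      barycenterCost P X S f ν ≤ barycenterCost P X S f ν') :
    unfairness P X S f = barycenterCost P X S f ν :=
  le_antisymm (iInf₂_le ν ‹_›) (le_iInf₂ hmin)

theorem unfairness_eq_zero_of_forall_condLaw_eq [IsProbabilityMeasure ν]
    (h : ∀ s, condLaw P X S f s = ν) : unfairness P X S f = 0 :=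
  le_antisymm ((iInf₂_le ν ‹_›).trans_eq (by simp [h, W2sq_self])) zero_le

section Transport

variable {T : Fin m → Euc k → Euc k}

theorem condLaw_transport (hS : Measurable S) (hf : Measurable fun ω ↦ f (X ω) (S ω)) {s : Fin m}
    (hT : Measurable (T s)) :
    condLaw P X S (fun x s ↦ T s (f x s)) s = (condLaw P X S f s).map (T s) := by
  rw [condLaw, condLaw, Measure.map_map hT hf]
  exact Measure.map_congr (ae_eq_cond_fiber hS s fun t ω ↦ T t (f (X ω) (S ω)))

theorem risk_transport [IsFiniteMeasure P] (hS : Measurable S)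
    (hf : Measurable fun ω ↦ f (X ω) (S ω)) (hT : ∀ s, Measurable (T s)) :
    risk P X S f (fun x s ↦ T s (f x s)) =
      ∑ s, P {ω | S ω = s} * ∫⁻ z, (‖z - T s z‖₊ : ℝ≥0∞) ^ 2 ∂condLaw P X S f s := by
  refine (lintegral_eq_sum_cond_fiber hS P _).trans <| Finset.sum_congr rfl fun s _ ↦ ?_
  have := hT s
  rw [condLaw, lintegral_map (by fun_prop) hf]
  exact congrArg _ <| lintegral_congr_ae <| ae_eq_cond_fiber hS s
    fun t ω ↦ (‖f (X ω) (S ω) - T t (f (X ω) (S ω))‖₊ : ℝ≥0∞) ^ 2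

theorem measurable_transport (hf : Measurable fun p : Euc d × Fin m ↦ f p.1 p.2)
    (hT : ∀ s, Measurable (T s)) :
    Measurable fun p : Euc d × Fin m ↦ T p.2 (f p.1 p.2) := by
  have hT' : Measurable fun q : Euc k × Fin m ↦ T q.2 q.1 :=
    measurable_from_prod_countable_left hT
  exact hT'.comp (hf.prodMk measurable_snd)

end Transport

end Fairness

theorem optimal_fair_projection_general {d k m : ℕ} {Ω : Type*} [MeasurableSpace Ω]
    (P : Measure Ω) [IsProbabilityMeasure P]
    (X : Ω → Euc d) (S : Ω → Fin m) (hX : Measurable X) (hS : Measurable S)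
    (fstar : Euc d → Fin m → Euc k)
    (hfstar : Measurable fun p : Euc d × Fin m => fstar p.1 p.2)
    (ν₀ : Measure (Euc k)) (hν₀ : IsProbabilityMeasure ν₀)
    (hν₀min : ∀ ν : Measure (Euc k), IsProbabilityMeasure ν →
      ∑ s : Fin m, P {ω | S ω = s} * W2sq (condLaw P X S fstar s) ν₀
        ≤ ∑ s : Fin m, P {ω | S ω = s} * W2sq (condLaw P X S fstar s) ν)
    (T : Fin m → Euc k → Euc k) (hT : ∀ s, Measurable (T s))
    (hTpush : ∀ s : Fin m, (condLaw P X S fstar s).map (T s) = ν₀)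
    (hTopt : ∀ s : Fin m, W2sq (condLaw P X S fstar s) ν₀
      = ∫⁻ z, (‖z - T s z‖₊ : ℝ≥0∞) ^ 2 ∂(condLaw P X S fstar s)) :
    (∑ s : Fin m, P {ω | S ω = s} * W2sq (condLaw P X S fstar s) ν₀
        = unfairness P X S fstar)
    ∧ (⨅ f : {f : Euc d → Fin m → Euc k //
          Measurable (fun p : Euc d × Fin m => f p.1 p.2) ∧ unfairness P X S f = 0},
        risk P X S fstar f.1) = unfairness P X S fstar
    ∧ risk P X S fstar (fun x s => T s (fstar x s)) = unfairness P X S fstar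
    ∧ unfairness P X S (fun x s => T s (fstar x s)) = 0
    ∧ P.map (fun ω => T (S ω) (fstar (X ω) (S ω))) = ν₀ := by
  have hXS {h : Euc d → Fin m → Euc k} (hh : Measurable fun p : Euc d × Fin m ↦ h p.1 p.2) :
      Measurable fun ω ↦ h (X ω) (S ω) := hh.comp (hX.prodMk hS)
  have hf₀ : Measurable fun p : Euc d × Fin m ↦ T p.2 (fstar p.1 p.2) :=
    measurable_transport hfstar hT
  have hvalue : barycenterCost P X S fstar ν₀ = unfairness P X S fstar :=
    (unfairness_eq_barycenterCost_of_forall_le hν₀min).symm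
  have hlaw (s : Fin m) : condLaw P X S (fun x s ↦ T s (fstar x s)) s = ν₀ :=
    (condLaw_transport hS (hXS hfstar) (hT s)).trans (hTpush s)
  have hfair : unfairness P X S (fun x s ↦ T s (fstar x s)) = 0 :=
    unfairness_eq_zero_of_forall_condLaw_eq hlaw
  have hrisk : risk P X S fstar (fun x s ↦ T s (fstar x s)) = unfairness P X S fstar := by
    simp only [risk_transport hS (hXS hfstar) hT, ← hTopt, ← hvalue, barycenterCost]
  refine ⟨hvalue, le_antisymm ?_ ?_, hrisk, hfair,
    map_eq_of_forall_map_cond_fiber_eq hS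
      (hXS (h := fun x s ↦ T s (fstar x s)) hf₀) hlaw⟩
  · exact iInf_le_of_le ⟨fun x s ↦ T s (fstar x s), hf₀, hfair⟩ hrisk.le
  · exact le_iInf fun ⟨f, hf, hfair⟩ ↦
      unfairness_le_risk_of_unfairness_eq_zero hS (hXS hfstar) (hXS hf) hfair

/-- Theorem 1: If each conditional law `ν_{f*|s}` is absolutely continuous
w.r.t. Lebesgue measure and has finite second moment, then the minimal risk among exactly
fair models equals `U(f*) = min_ν Σ_s p_s W₂²(ν_{f*|s}, ν)`, which is attained at the
barycenter `ν₀`; moreover `f₀(x,s) := T_{f*|s,ν₀}(f*(x,s))` attains the minimum and its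
law is `ν₀`. -/
theorem optimal_fair_projection {d k m : ℕ} {Ω : Type*} [MeasurableSpace Ω]
    (P : Measure Ω) [IsProbabilityMeasure P]
    (X : Ω → Euc d) (S : Ω → Fin m) (hX : Measurable X) (hS : Measurable S)
    (hps : ∀ s : Fin m, 0 < P {ω | S ω = s})
    (fstar : Euc d → Fin m → Euc k)
    (hfstar : Measurable fun p : Euc d × Fin m => fstar p.1 p.2)
    (hac : ∀ s : Fin m, condLaw P X S fstar s ≪ (volume : Measure (Euc k)))
    (hmom : ∀ s : Fin m, secondMoment (condLaw P X S fstar s) < ⊤)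
    -- `ν₀` is a minimizer of `ν ↦ Σ_s p_s W₂²(ν_{f*|s}, ν)`, i.e. a Wasserstein barycenter
    (ν₀ : Measure (Euc k)) (hν₀ : IsProbabilityMeasure ν₀)
    (hν₀min : ∀ ν : Measure (Euc k), IsProbabilityMeasure ν →
      ∑ s : Fin m, P {ω | S ω = s} * W2sq (condLaw P X S fstar s) ν₀
        ≤ ∑ s : Fin m, P {ω | S ω = s} * W2sq (condLaw P X S fstar s) ν)
    -- `T s` is the optimal transport map from `ν_{f*|s}` to `ν₀`
    (T : Fin m → Euc k → Euc k) (hT : ∀ s, Measurable (T s))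
    (hTpush : ∀ s : Fin m, (condLaw P X S fstar s).map (T s) = ν₀)
    (hTopt : ∀ s : Fin m, W2sq (condLaw P X S fstar s) ν₀
      = ∫⁻ z, (‖z - T s z‖₊ : ℝ≥0∞) ^ 2 ∂(condLaw P X S fstar s)) :
    -- the attained barycenter value equals `U(f*)`
    (∑ s : Fin m, P {ω | S ω = s} * W2sq (condLaw P X S fstar s) ν₀
        = unfairness P X S fstar)
    -- the minimal risk over exactly fair measurable models equals `U(f*)`
    ∧ (⨅ f : {f : Euc d → Fin m → Euc k //
          Measurable (fun p : Euc d × Fin m => f p.1 p.2) ∧ unfairness P X S f = 0},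
        risk P X S fstar f.1) = unfairness P X S fstar
    -- `f₀` attains this minimum:
    ∧ risk P X S fstar (fun x s => T s (fstar x s)) = unfairness P X S fstar
    ∧ unfairness P X S (fun x s => T s (fstar x s)) = 0
    -- and the law of `f₀(X,S)` is `ν₀`
    ∧ P.map (fun ω => T (S ω) (fstar (X ω) (S ω))) = ν₀ := by
  exact optimal_fair_projection_general P X S hX hS fstar hfstar ν₀ hν₀ hν₀min T hT hTpush hTopt

end
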